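/- arXiv:2205.01856 — 2 statements merged into one kernel-verified Lean document; each statement's English description precedes it below -/
import Mathlib

section
/- (Müntz–Szász theorem, L² case) Let S be a subset of the nonnegative integers. The linear span of the monomials {xⁿ : n ∈ S} is dense in L²[0,1] if and only if ∑_{n∈S} 1/(n+1) = ∞. -/
open MeasureTheory Filter Topology

/-- The measure on `[0,1]` underlying the Hilbert space `L²[0,1]`. -/
noncomputable def mu01 : Measure ℝ := volume.restrict (Set.Icc 0 1)

/-!
With `a = s + 1/2`, the Gram matrix of the functions `xˢ` is the Cauchy matrix `1 / (aᵢ + aⱼ)`.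
The residual of `xᵗ`, `b = t + 1/2`, modulo finitely many `x^(sᵢ)` has inner product
`B(c) B(b) / (c + b)` with the power function of parameter `c`, where `B` is the Blaschke product
vanishing at the `aᵢ`: subtracting a combination of the `x^(sᵢ)` adds poles at the `-aᵢ`, and the
partial fraction expansion of `B(c) B(b) / (c + b)` supplies the coefficients.  Hence the squared
distance is `B(b)² / (2b) = (2b)⁻¹ ∏ (1 - 4aᵢb / (aᵢ + b)²)`.  It tends to `0` exactly when
`∑ 4aᵢb / (aᵢ + b)²` diverges, a condition that does not depend on `b`.  If it holds, all monomials
are limits of the span, and Weierstrass approximation gives density; if it fails, the exponents are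
countable and every missing exponent stays at positive distance.
-/

section InfiniteProduct

variable {ι : Type*} {f : ι → ℝ}

lemma tendsto_sum_atTop_of_not_summable (hf : 0 ≤ f) (h : ¬Summable f) :
    Tendsto (fun F : Finset ι ↦ ∑ i ∈ F, f i) atTop atTop :=
  (tendsto_atTop_of_monotone (Finset.sum_mono_set_of_nonneg hf)).resolve_right
    fun ⟨x, hx⟩ ↦ h (HasSum.summable (a := x) hx)

lemma tendsto_prod_one_sub_zero_iff_not_summable (hf₀ : 0 ≤ f) (hf₁ : ∀ i, f i < 1) :
    Tendsto (fun F : Finset ι ↦ ∏ i ∈ F, (1 - f i)) atTop (𝓝 0) ↔ ¬Summable f := by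
  refine ⟨fun hlim hsum ↦ ?_, fun hsum ↦ ?_⟩
  · have hprod : HasProd (fun i ↦ 1 + -f i) (∏' i, (1 + -f i)) :=
      (multipliable_one_add_of_summable hsum.neg.norm).hasProd
    refine tprod_one_add_ne_zero_of_summable (fun i ↦ ?_) hsum.neg.norm
      (tendsto_nhds_unique hprod ?_)
    · linarith [hf₁ i]
    · simpa only [HasProd, SummationFilter.unconditional_filter, sub_eq_add_neg] using hlim
  · have hexp := Real.tendsto_exp_neg_atTop_nhds_zero.comp
      (tendsto_sum_atTop_of_not_summable hf₀ hsum)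
    refine squeeze_zero (fun F ↦ Finset.prod_nonneg fun i _ ↦ sub_nonneg.2 (hf₁ i).le)
      (fun F ↦ ?_) hexp
    rw [Function.comp_apply, ← Finset.sum_neg_distrib, Real.exp_sum]
    exact Finset.prod_le_prod (fun i _ ↦ sub_nonneg.2 (hf₁ i).le)
      fun i _ ↦ Real.one_sub_le_exp_neg (f i)

end InfiniteProduct

section Blaschke

variable {ι : Type*} {a : ι → ℝ}

/-- The finite Blaschke product for the right half-plane with zeros `a i`, `i ∈ F`, on the
real axis. -/
noncomputable def blaschkeProd (a : ι → ℝ) (F : Finset ι) (c : ℝ) : ℝ :=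
  ∏ i ∈ F, (c - a i) / (c + a i)

lemma blaschkeProd_eq_zero {F : Finset ι} {i : ι} (hi : i ∈ F) : blaschkeProd a F (a i) = 0 :=
  Finset.prod_eq_zero hi (by simp)

lemma blaschkeProd_ne_zero (ha : Function.Injective a) (ha₀ : ∀ i, 0 < a i) {F : Finset ι} {i : ι}
    (hi : i ∉ F) : blaschkeProd a F (a i) ≠ 0 :=
  Finset.prod_ne_zero_iff.2 fun j hj ↦ div_ne_zero
    (sub_ne_zero.2 (ha.ne (ne_of_mem_of_not_mem hj hi).symm)) (add_pos (ha₀ i) (ha₀ j)).ne'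

lemma blaschkeProd_sq (ha₀ : ∀ i, 0 < a i) (F : Finset ι) {c : ℝ} (hc : 0 < c) :
    blaschkeProd a F c ^ 2 = ∏ i ∈ F, (1 - 4 * a i * c / (a i + c) ^ 2) := by
  rw [blaschkeProd, ← Finset.prod_pow]
  refine Finset.prod_congr rfl fun i _ ↦ ?_
  have := ha₀ i
  field_simp
  ring

lemma exists_partialFraction_blaschkeProd (ha : Function.Injective a) (ha₀ : ∀ i, 0 < a i)
    (F : Finset ι) {d : ℝ} (hd : 0 < d) :
    ∃ k : ι → ℝ, ∀ c, 0 < c →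
      1 / (c + d) - ∑ i ∈ F, k i / (c + a i) =
        blaschkeProd a F c * blaschkeProd a F d / (c + d) := by
  classical
  induction F using Finset.induction_on generalizing d with
  | empty => exact ⟨0, fun c _ ↦ by simp [blaschkeProd]⟩
  | insert l F hl ih =>
    obtain ⟨k, hk⟩ := ih hd
    obtain ⟨m, hm⟩ := ih (ha₀ l)
    have hBl : blaschkeProd a F (a l) ≠ 0 := blaschkeProd_ne_zero ha ha₀ hl
    have hinsert (c : ℝ) :
        blaschkeProd a (insert l F) c = (c - a l) / (c + a l) * blaschkeProd a F c :=
      Finset.prod_insert hl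
    -- This multiple of the identity for `a l` makes the combined right-hand side vanish at `a l`.
    set r : ℝ := blaschkeProd a F d * (2 * a l) / (blaschkeProd a F (a l) * (d + a l)) with hr
    refine ⟨Function.update (fun i ↦ k i - r * m i) l r, fun c hc ↦ ?_⟩
    have hsum : ∑ i ∈ insert l F, Function.update (fun i ↦ k i - r * m i) l r i / (c + a i) =
        r / (c + a l) + (∑ i ∈ F, k i / (c + a i) - r * ∑ i ∈ F, m i / (c + a i)) := by
      rw [Finset.sum_insert hl, Function.update_self, Finset.mul_sum, ← Finset.sum_sub_distrib]
      congr 1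
      refine Finset.sum_congr rfl fun i hi ↦ ?_
      rw [Function.update_of_ne (ne_of_mem_of_not_mem hi hl)]
      ring
    have hl₀ := ha₀ l
    calc _ = (1 / (c + d) - ∑ i ∈ F, k i / (c + a i))
          - r * (1 / (c + a l) - ∑ i ∈ F, m i / (c + a i)) := by rw [hsum]; ring
      _ = blaschkeProd a F c * blaschkeProd a F d / (c + d)
          - r * (blaschkeProd a F c * blaschkeProd a F (a l) / (c + a l)) := by
        rw [hk c hc, hm c hc]
      _ = _ := by
        rw [hinsert, hinsert, hr]
        field_simp
        ring

end Blaschke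

section Distance

lemma infDist_eq_norm_of_mem_orthogonal {𝕜 E : Type*} [RCLike 𝕜] [NormedAddCommGroup E]
    [InnerProductSpace 𝕜 E] {K : Submodule 𝕜 E} {x w : E} (hw : w ∈ Kᗮ) (hxw : x - w ∈ K) :
    Metric.infDist x K = ‖w‖ := by
  refine le_antisymm ?_ ((Metric.le_infDist ⟨0, K.zero_mem⟩).2 fun y hy ↦ ?_)
  · simpa [dist_eq_norm] using Metric.infDist_le_dist_of_mem hxw (x := x)
  · have hpyth := norm_add_sq_eq_norm_sq_add_norm_sq_of_inner_eq_zero (𝕜 := 𝕜) _ _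
      (Submodule.inner_right_of_mem_orthogonal (K.sub_mem hxw hy) hw)
    rw [sub_sub, add_comm w, ← sub_sub, sub_add_cancel] at hpyth
    rw [dist_eq_norm]
    nlinarith [norm_nonneg (x - y), mul_self_nonneg ‖x - y - w‖]

lemma mem_closure_span_range_iff_tendsto_infDist {R E ι : Type*} [Semiring R]
    [PseudoMetricSpace E] [AddCommMonoid E] [Module R E] {v : ι → E} {x : E} :
    x ∈ closure (Submodule.span R (Set.range v) : Set E) ↔
      Tendsto (fun F : Finset ι ↦ Metric.infDist x (Submodule.span R (v '' F) : Set E))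
        atTop (𝓝 0) := by
  classical
  refine ⟨fun hx ↦ ?_, fun h ↦ Metric.mem_closure_iff.2 fun ε hε ↦ ?_⟩
  · refine Metric.tendsto_atTop.2 fun ε hε ↦ ?_
    obtain ⟨y, hy, hxy⟩ := Metric.mem_closure_iff.1 hx ε hε
    obtain ⟨c, rfl⟩ := Finsupp.mem_span_range_iff_exists_finsupp.1 hy
    refine ⟨c.support, fun F hF ↦ ?_⟩
    rw [Real.dist_0_eq_abs, abs_of_nonneg Metric.infDist_nonneg]
    refine (Metric.infDist_le_dist_of_mem (Submodule.sum_mem _ fun i hi ↦ ?_)).trans_lt hxy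
    exact Submodule.smul_mem _ _ (Submodule.subset_span (Set.mem_image_of_mem v (hF hi)))
  · obtain ⟨F, hF⟩ := (h.eventually_lt_const hε).exists
    obtain ⟨y, hy, hxy⟩ := (Metric.infDist_lt_iff ⟨0, Submodule.zero_mem _⟩).1 hF
    exact ⟨y, Submodule.span_mono (Set.image_subset_range v F) hy, hxy⟩

end Distance

section Cauchy

variable {𝕜 H ι : Type*} [RCLike 𝕜] [NormedAddCommGroup H] [InnerProductSpace 𝕜 H]
  {v : ι → H} {u : H} {a : ι → ℝ} {b : ℝ}

lemma exists_residual_of_inner_eq (ha : Function.Injective a) (ha₀ : ∀ i, 0 < a i) (hb : 0 < b)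
    (hv : ∀ i j, inner 𝕜 (v i) (v j) = ((1 / (a i + a j) : ℝ) : 𝕜))
    (hvu : ∀ i, inner 𝕜 (v i) u = ((1 / (a i + b) : ℝ) : 𝕜))
    (hu : inner 𝕜 u u = ((1 / (b + b) : ℝ) : 𝕜)) (F : Finset ι) :
    ∃ w ∈ (Submodule.span 𝕜 (v '' F))ᗮ, u - w ∈ Submodule.span 𝕜 (v '' F) ∧
      ‖w‖ ^ 2 = blaschkeProd a F b ^ 2 / (b + b) := by
  obtain ⟨k, hk⟩ := exists_partialFraction_blaschkeProd ha ha₀ F hb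
  set w := u - ∑ i ∈ F, (k i : 𝕜) • v i with hw
  have hinner {x : H} {c : ℝ} (hc : 0 < c)
      (hxv : ∀ i, inner 𝕜 x (v i) = ((1 / (c + a i) : ℝ) : 𝕜))
      (hxu : inner 𝕜 x u = ((1 / (c + b) : ℝ) : 𝕜)) :
      inner 𝕜 x w = ((blaschkeProd a F c * blaschkeProd a F b / (c + b) : ℝ) : 𝕜) := by
    rw [← hk c hc, hw, inner_sub_right, inner_sum, hxu]
    simp [inner_smul_right, hxv, div_eq_mul_inv]
  have huw : u - w ∈ Submodule.span 𝕜 (v '' F) := by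
    rw [hw, sub_sub_cancel]
    exact Submodule.sum_mem _ fun i hi ↦
      Submodule.smul_mem _ _ (Submodule.subset_span (Set.mem_image_of_mem v hi))
  have horth : w ∈ (Submodule.span 𝕜 (v '' F))ᗮ := by
    refine (Submodule.isOrtho_span.2 ?_).symm (Submodule.mem_span_singleton_self w)
    rintro _ ⟨i, hi, rfl⟩ _ rfl
    rw [hinner (ha₀ i) (hv i) (hvu i), blaschkeProd_eq_zero hi]
    simp
  have hnorm : ‖w‖ ^ 2 = blaschkeProd a F b ^ 2 / (b + b) := by
    have hww : inner 𝕜 w w = inner 𝕜 u w := by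
      rw [← sub_eq_zero, ← inner_sub_left, ← neg_sub, inner_neg_left,
        Submodule.inner_right_of_mem_orthogonal huw horth, neg_zero]
    rw [hinner hb (fun i ↦ ?_) hu, inner_self_eq_norm_sq_to_K] at hww
    · rw [sq (blaschkeProd a F b)]
      exact_mod_cast hww
    · rw [← inner_conj_symm, hvu, RCLike.conj_ofReal, add_comm]
  exact ⟨w, horth, huw, hnorm⟩

lemma infDist_span_sq_of_inner_eq (ha : Function.Injective a) (ha₀ : ∀ i, 0 < a i) (hb : 0 < b)
    (hv : ∀ i j, inner 𝕜 (v i) (v j) = ((1 / (a i + a j) : ℝ) : 𝕜))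
    (hvu : ∀ i, inner 𝕜 (v i) u = ((1 / (a i + b) : ℝ) : 𝕜))
    (hu : inner 𝕜 u u = ((1 / (b + b) : ℝ) : 𝕜)) (F : Finset ι) :
    Metric.infDist u (Submodule.span 𝕜 (v '' F) : Set H) ^ 2 =
      (b + b)⁻¹ * ∏ i ∈ F, (1 - 4 * a i * b / (a i + b) ^ 2) := by
  obtain ⟨w, horth, huw, hnorm⟩ := exists_residual_of_inner_eq ha ha₀ hb hv hvu hu F
  rw [infDist_eq_norm_of_mem_orthogonal horth huw, hnorm, blaschkeProd_sq ha₀ F hb, div_eq_inv_mul]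

lemma summable_four_mul_div_sq_iff (ha₀ : ∀ i, 0 < a i) (hb : 0 < b) :
    Summable (fun i ↦ 4 * a i * b / (a i + b) ^ 2) ↔
      Summable fun i ↦ 2 * a i / ((2 * a i) ^ 2 + 1) := by
  refine ⟨fun h ↦ (h.mul_left ((1 + b ^ 2) / b)).of_nonneg_of_le (fun i ↦ ?_) fun i ↦ ?_,
    fun h ↦ (h.mul_left (8 * b + 2 / b)).of_nonneg_of_le (fun i ↦ ?_) fun i ↦ ?_⟩
  all_goals have hai := ha₀ i
  · positivity
  · have hle : (a i + b) ^ 2 ≤ 2 * (1 + b ^ 2) * ((2 * a i) ^ 2 + 1) := by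
      nlinarith [sq_nonneg (a i - b), sq_nonneg (a i * b), sq_nonneg (a i)]
    rw [div_mul_div_comm, div_le_div_iff₀ (by positivity) (by positivity)]
    nlinarith [mul_le_mul_of_nonneg_left hle (by positivity : 0 ≤ 2 * a i * b)]
  · positivity
  · have hle : b ^ 2 * ((2 * a i) ^ 2 + 1) ≤ (4 * b ^ 2 + 1) * (a i + b) ^ 2 := by
      nlinarith [mul_pos hai hb, mul_pos (mul_pos hai hb) (sq_pos_of_pos hb), sq_nonneg (b ^ 2),
        sq_nonneg (a i)]
    rw [show 8 * b + 2 / b = (2 * (4 * b ^ 2 + 1)) / b by field_simp; ring,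
      div_mul_div_comm, div_le_div_iff₀ (by positivity) (by positivity)]
    nlinarith [mul_le_mul_of_nonneg_left hle (by positivity : 0 ≤ 4 * a i)]

lemma mem_closure_span_range_iff_of_inner_eq (ha : Function.Injective a) (ha₀ : ∀ i, 0 < a i)
    (hb : 0 < b) (hba : b ∉ Set.range a)
    (hv : ∀ i j, inner 𝕜 (v i) (v j) = ((1 / (a i + a j) : ℝ) : 𝕜))
    (hvu : ∀ i, inner 𝕜 (v i) u = ((1 / (a i + b) : ℝ) : 𝕜))
    (hu : inner 𝕜 u u = ((1 / (b + b) : ℝ) : 𝕜)) :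
    u ∈ closure (Submodule.span 𝕜 (Set.range v) : Set H) ↔
      ¬Summable fun i ↦ 2 * a i / ((2 * a i) ^ 2 + 1) := by
  have hlt (i : ι) : 4 * a i * b / (a i + b) ^ 2 < 1 := by
    have hne : a i - b ≠ 0 := sub_ne_zero.2 fun h ↦ hba ⟨i, h⟩
    have := ha₀ i
    rw [div_lt_one (by positivity)]
    nlinarith [sq_pos_of_ne_zero hne]
  have hnonneg : 0 ≤ fun i ↦ 4 * a i * b / (a i + b) ^ 2 := fun i ↦ by
    have := ha₀ i
    positivity
  rw [← summable_four_mul_div_sq_iff ha₀ hb,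
    ← tendsto_prod_one_sub_zero_iff_not_summable hnonneg hlt,
    mem_closure_span_range_iff_tendsto_infDist]
  have hsq := infDist_span_sq_of_inner_eq ha ha₀ hb hv hvu hu
  refine ⟨fun h ↦ ?_, fun h ↦ ?_⟩
  · have := (h.pow 2).const_mul (b + b)
    simpa only [hsq, mul_inv_cancel_left₀ (add_pos hb hb).ne', ne_eq, OfNat.ofNat_ne_zero,
      not_false_eq_true, zero_pow, mul_zero] using this
  · have := (h.const_mul (b + b)⁻¹).sqrt
    simpa only [← hsq, Real.sqrt_sq Metric.infDist_nonneg, mul_zero, Real.sqrt_zero] using this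

end Cauchy

section Weierstrass

variable {𝕜 : Type*} [RCLike 𝕜]

lemma exists_polynomial_norm_eval_sub_lt {a b : ℝ} {f : ℝ → 𝕜} (hf : ContinuousOn f (Set.Icc a b))
    {ε : ℝ} (hε : 0 < ε) :
    ∃ P : Polynomial 𝕜, ∀ x ∈ Set.Icc a b, ‖P.eval (x : 𝕜) - f x‖ < ε := by
  obtain ⟨P, hP⟩ := exists_polynomial_near_of_continuousOn a b (fun x ↦ RCLike.re (f x))
    (RCLike.continuous_re.comp_continuousOn hf) (ε / 2) (half_pos hε)
  obtain ⟨Q, hQ⟩ := exists_polynomial_near_of_continuousOn a b (fun x ↦ RCLike.im (f x))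
    (RCLike.continuous_im.comp_continuousOn hf) (ε / 2) (half_pos hε)
  have heval (R : Polynomial ℝ) (x : ℝ) :
      (R.map (algebraMap ℝ 𝕜)).eval (x : 𝕜) = ((R.eval x : ℝ) : 𝕜) := by
    rw [← RCLike.algebraMap_eq_ofReal, Polynomial.eval_map_algebraMap,
      Polynomial.aeval_algebraMap_apply_eq_algebraMap_eval]
  refine ⟨P.map (algebraMap ℝ 𝕜) + Polynomial.C RCLike.I * Q.map (algebraMap ℝ 𝕜),
    fun x hx ↦ ?_⟩
  have hsplit : (P.map (algebraMap ℝ 𝕜) + Polynomial.C RCLike.I * Q.map (algebraMap ℝ 𝕜)).eval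
      (x : 𝕜) - f x = ((P.eval x - RCLike.re (f x) : ℝ) : 𝕜) +
        RCLike.I * ((Q.eval x - RCLike.im (f x) : ℝ) : 𝕜) := by
    nth_rw 1 [← RCLike.re_add_im (f x)]
    simp only [Polynomial.eval_add, Polynomial.eval_mul, Polynomial.eval_C, heval]
    push_cast
    ring
  calc ‖_‖ ≤ ‖((P.eval x - RCLike.re (f x) : ℝ) : 𝕜)‖ +
        ‖RCLike.I * ((Q.eval x - RCLike.im (f x) : ℝ) : 𝕜)‖ := hsplit ▸ norm_add_le _ _
    _ ≤ |P.eval x - RCLike.re (f x)| + |Q.eval x - RCLike.im (f x)| := by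
      rw [norm_mul, RCLike.norm_ofReal, RCLike.norm_ofReal]
      gcongr
      refine mul_le_of_le_one_left (abs_nonneg _) ?_
      rw [RCLike.norm_I]
      split_ifs <;> norm_num
    _ < ε := by linarith [hP x hx, hQ x hx]

variable {μ : Measure ℝ} {p : ENNReal} {K : Submodule 𝕜 (Lp 𝕜 p μ)}

lemma exists_mem_ae_eq_eval (hK : ∀ n : ℕ, ∃ g ∈ K, g =ᵐ[μ] fun x ↦ (x : 𝕜) ^ n)
    (P : Polynomial 𝕜) : ∃ g ∈ K, g =ᵐ[μ] fun x ↦ P.eval (x : 𝕜) := by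
  induction P using Polynomial.induction_on' with
  | add P Q hP hQ =>
    obtain ⟨g, hg, hgP⟩ := hP
    obtain ⟨h, hh, hhQ⟩ := hQ
    refine ⟨g + h, K.add_mem hg hh, ?_⟩
    filter_upwards [Lp.coeFn_add g h, hgP, hhQ] with x hadd hgx hhx
    rw [hadd, Pi.add_apply, hgx, hhx, Polynomial.eval_add]
  | monomial n c =>
    obtain ⟨g, hg, hgn⟩ := hK n
    refine ⟨c • g, K.smul_mem c hg, ?_⟩
    filter_upwards [Lp.coeFn_smul c g, hgn] with x hsmul hgx
    rw [hsmul, Pi.smul_apply, hgx, Polynomial.eval_monomial, smul_eq_mul]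

lemma dense_of_forall_exists_ae_eq_pow [IsFiniteMeasure μ] [Fact (1 ≤ p)] (hp : p ≠ ⊤) {a b : ℝ}
    (hμ : ∀ᵐ x ∂μ, x ∈ Set.Icc a b) (hK : ∀ n : ℕ, ∃ g ∈ K, g =ᵐ[μ] fun x ↦ (x : 𝕜) ^ n) :
    Dense (K : Set (Lp 𝕜 p μ)) := by
  rw [← dense_closure]
  refine (BoundedContinuousFunction.toLp_denseRange 𝕜 μ 𝕜 hp).mono ?_
  rintro _ ⟨f, rfl⟩
  refine Metric.mem_closure_iff.2 fun ε hε ↦ ?_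
  set M : ℝ := measureUnivNNReal μ ^ p.toReal⁻¹
  obtain ⟨P, hP⟩ := exists_polynomial_norm_eval_sub_lt (𝕜 := 𝕜) (a := a) (b := b)
    f.continuous.continuousOn (div_pos hε (by positivity : 0 < M + 1))
  obtain ⟨g, hgK, hgP⟩ := exists_mem_ae_eq_eval hK P
  refine ⟨g, hgK, ?_⟩
  have hbound : ∀ᵐ x ∂μ, ‖(g - BoundedContinuousFunction.toLp p μ 𝕜 f : Lp 𝕜 p μ) x‖ ≤
      ε / (M + 1) := by
    filter_upwards [hμ, hgP, Lp.coeFn_sub g (BoundedContinuousFunction.toLp p μ 𝕜 f),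
      BoundedContinuousFunction.coeFn_toLp p μ 𝕜 f] with x hx hgx hsub hfx
    rw [hsub, Pi.sub_apply, hgx, hfx]
    exact (hP x hx).le
  calc dist _ g = ‖g - BoundedContinuousFunction.toLp p μ 𝕜 f‖ := dist_eq_norm' _ _
    _ ≤ M * (ε / (M + 1)) := Lp.norm_le_of_ae_bound (by positivity) hbound
    _ < ε := by
      rw [mul_div_left_comm]
      exact mul_lt_of_lt_one_right hε ((div_lt_one (by positivity)).2 (lt_add_one M))

end Weierstrass

section PowerFunctions

variable {𝕜 : Type*} [RCLike 𝕜] {s t : ℝ}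

instance : IsProbabilityMeasure mu01 := ⟨by simp [mu01]⟩

lemma ae_mu01_mem_Ioc : ∀ᵐ x ∂mu01, x ∈ Set.Ioc (0 : ℝ) 1 := by
  rw [mu01, ← restrict_Ioc_eq_restrict_Icc]
  exact ae_restrict_mem measurableSet_Ioc

lemma integral_mu01 {E : Type*} [NormedAddCommGroup E] [NormedSpace ℝ E] (f : ℝ → E) :
    ∫ x, f x ∂mu01 = ∫ x in (0)..1, f x := by
  rw [mu01, integral_Icc_eq_integral_Ioc, intervalIntegral.integral_of_le zero_le_one]

lemma memLp_two_rpow (hs : -1 / 2 < s) :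
    MemLp (fun x : ℝ ↦ ((x ^ s : ℝ) : 𝕜)) 2 mu01 := by
  refine MemLp.ofReal ((memLp_two_iff_integrable_sq (by fun_prop)).2 ?_)
  have hint : Integrable (fun x : ℝ ↦ x ^ (s * 2)) mu01 := by
    rw [mu01, ← IntegrableOn, integrableOn_Icc_iff_integrableOn_Ioc,
      ← intervalIntegrable_iff_integrableOn_Ioc_of_le zero_le_one]
    exact intervalIntegral.intervalIntegrable_rpow' (by linarith)
  refine hint.congr ?_
  filter_upwards [ae_mu01_mem_Ioc] with x hx
  exact_mod_cast Real.rpow_mul_natCast hx.1.le s 2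

lemma inner_eq_of_ae_eq_rpow (hs : -1 / 2 < s) (ht : -1 / 2 < t) {f g : Lp 𝕜 2 mu01}
    (hf : f =ᵐ[mu01] fun x ↦ ((x ^ s : ℝ) : 𝕜)) (hg : g =ᵐ[mu01] fun x ↦ ((x ^ t : ℝ) : 𝕜)) :
    inner 𝕜 f g = ((1 / ((s + 1 / 2) + (t + 1 / 2)) : ℝ) : 𝕜) := by
  have hfg : ∀ᵐ x ∂mu01, inner 𝕜 (f x) (g x) = ((x ^ (s + t) : ℝ) : 𝕜) := by
    filter_upwards [hf, hg, ae_mu01_mem_Ioc] with x hfx hgx hx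
    rw [hfx, hgx, RCLike.inner_apply', RCLike.conj_ofReal, Real.rpow_add hx.1, RCLike.ofReal_mul]
  rw [L2.inner_def, integral_congr_ae hfg, integral_ofReal, integral_mu01,
    integral_rpow (Or.inl (by linarith)), Real.one_rpow, Real.zero_rpow (by linarith), sub_zero]
  congr 2
  ring

end PowerFunctions

lemma mem_closure_span_range_iff_of_ae_eq_rpow {𝕜 ι : Type*} [RCLike 𝕜] {r : ι → ℝ}
    (hr : Function.Injective r) (hr_gt : ∀ i, -1 / 2 < r i) {mono : ι → Lp 𝕜 2 mu01}
    (hmono : ∀ i, mono i =ᵐ[mu01] fun x ↦ ((x ^ r i : ℝ) : 𝕜))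
    {s : ℝ} (hs : -1 / 2 < s) (hsr : s ∉ Set.range r) {f : Lp 𝕜 2 mu01}
    (hf : f =ᵐ[mu01] fun x ↦ ((x ^ s : ℝ) : 𝕜)) :
    f ∈ closure (Submodule.span 𝕜 (Set.range mono) : Set (Lp 𝕜 2 mu01)) ↔
      ¬Summable fun i ↦ (2 * r i + 1) / ((2 * r i + 1) ^ 2 + 1) := by
  have hadd (x : ℝ) : 2 * x + 1 = 2 * (x + 1 / 2) := by ring
  simp only [hadd]
  refine mem_closure_span_range_iff_of_inner_eq (a := fun i ↦ r i + 1 / 2) (b := s + 1 / 2)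
    (fun i j hij ↦ hr (add_right_cancel hij)) (fun i ↦ by linarith [hr_gt i]) (by linarith)
    ?_ (fun i j ↦ inner_eq_of_ae_eq_rpow (hr_gt i) (hr_gt j) (hmono i) (hmono j))
    (fun i ↦ inner_eq_of_ae_eq_rpow (hr_gt i) hs (hmono i) hf) (inner_eq_of_ae_eq_rpow hs hs hf hf)
  rintro ⟨i, hi⟩
  exact hsr ⟨i, add_right_cancel hi⟩

lemma exists_gt_notMem_range_of_summable {ι : Type*} {r : ι → ℝ} (hr_gt : ∀ i, -1 / 2 < r i)
    (h : Summable fun i ↦ (2 * r i + 1) / ((2 * r i + 1) ^ 2 + 1)) :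
    ∃ s, -1 / 2 < s ∧ s ∉ Set.range r := by
  have hsupp : Function.support (fun i ↦ (2 * r i + 1) / ((2 * r i + 1) ^ 2 + 1)) = Set.univ :=
    Function.support_eq_univ fun i ↦
      (div_pos (by linarith [hr_gt i]) (by positivity) : (0 : ℝ) < _).ne'
  have : Countable ι := Set.countable_univ_iff.1 (hsupp ▸ h.countable_support)
  obtain ⟨s, hs, hsr⟩ := ((Set.countable_range r).dense_compl ℝ).exists_mem_open
    isOpen_Ioi (Set.nonempty_Ioi (a := (-1 / 2 : ℝ)))
  exact ⟨s, hsr, hs⟩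

theorem muntz_szasz_L2_general {𝕜 ι : Type*} [RCLike 𝕜] {r : ι → ℝ} (hr : Function.Injective r)
    (hr_gt : ∀ i, -1 / 2 < r i) {mono : ι → Lp 𝕜 2 mu01}
    (hmono : ∀ i, mono i =ᵐ[mu01] fun x ↦ ((x ^ r i : ℝ) : 𝕜)) :
    Dense (Submodule.span 𝕜 (Set.range mono) : Set (Lp 𝕜 2 mu01)) ↔
      ¬Summable fun i ↦ (2 * r i + 1) / ((2 * r i + 1) ^ 2 + 1) := by
  refine ⟨fun hdense hsum ↦ ?_, fun hsum ↦ ?_⟩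
  · obtain ⟨s, hs, hsr⟩ := exists_gt_notMem_range_of_summable hr_gt hsum
    exact (mem_closure_span_range_iff_of_ae_eq_rpow hr hr_gt hmono hs hsr
      (memLp_two_rpow hs).coeFn_toLp).1 (hdense _) hsum
  · rw [← dense_closure, ← Submodule.topologicalClosure_coe]
    refine dense_of_forall_exists_ae_eq_pow (by simp)
      (ae_mu01_mem_Ioc.mono fun x ↦ (Set.Ioc_subset_Icc_self ·)) fun n ↦ ?_
    have hn : -1 / 2 < (n : ℝ) := by linarith [n.cast_nonneg (α := ℝ)]
    have hpow := (memLp_two_rpow (𝕜 := 𝕜) hn).coeFn_toLp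
    refine ⟨(memLp_two_rpow hn).toLp, ?_, by simpa using hpow⟩
    by_cases hnr : (n : ℝ) ∈ Set.range r
    · obtain ⟨i, hi⟩ := hnr
      refine Submodule.le_topologicalClosure _ (Submodule.subset_span ⟨i, Lp.ext ?_⟩)
      exact (hi ▸ hmono i).trans hpow.symm
    · exact (mem_closure_span_range_iff_of_ae_eq_rpow hr hr_gt hmono hn hnr hpow).2 hsum

lemma summable_two_mul_add_one_div_iff {ι : Type*} {x : ι → ℝ} (hx : 0 ≤ x) :
    Summable (fun i ↦ (2 * x i + 1) / ((2 * x i + 1) ^ 2 + 1)) ↔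
      Summable fun i ↦ 1 / (x i + 1) := by
  refine ⟨fun h ↦ (h.mul_left 2).of_nonneg_of_le (fun i ↦ ?_) fun i ↦ ?_,
    fun h ↦ h.of_nonneg_of_le (fun i ↦ ?_) fun i ↦ ?_⟩
  all_goals have hxi : 0 ≤ x i := hx i
  · positivity
  · rw [mul_div_assoc', div_le_div_iff₀ (by positivity) (by positivity)]
    nlinarith only [hxi]
  · positivity
  · rw [div_le_div_iff₀ (by positivity) (by positivity)]
    nlinarith only [hxi]

lemma tsum_ofReal_eq_top_iff_not_summable {ι : Type*} {f : ι → ℝ} (hf : 0 ≤ f) :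
    ∑' i, ENNReal.ofReal (f i) = ⊤ ↔ ¬Summable f := by
  refine ⟨fun h hsum ↦ hsum.tsum_ofReal_ne_top h, fun h ↦ not_not.1 fun htop ↦ h ?_⟩
  have hsum := NNReal.summable_coe.2 (ENNReal.tsum_coe_ne_top_iff_summable.1 htop)
  simpa only [Real.coe_toNNReal _ (hf _)] using hsum

lemma tsum_one_div_natCast_add_one_eq_top_iff {ι : Type*} (x : ι → ℕ) :
    ∑' i, (1 : ENNReal) / (x i + 1) = ⊤ ↔
      ¬Summable fun i ↦ (2 * (x i : ℝ) + 1) / ((2 * (x i : ℝ) + 1) ^ 2 + 1) := by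
  have hterm (i : ι) : (1 : ENNReal) / (x i + 1) = ENNReal.ofReal (1 / ((x i : ℝ) + 1)) := by
    rw [ENNReal.ofReal_div_of_pos (by positivity), ENNReal.ofReal_add (by positivity) one_pos.le]
    simp
  rw [tsum_congr hterm, tsum_ofReal_eq_top_iff_not_summable fun i ↦ by positivity,
    ← summable_two_mul_add_one_div_iff fun i ↦ by positivity]

/-- **Müntz–Szász theorem, `L²` case.** Let `S ⊆ ℕ` and let `mono n ∈ L²[0,1]`
represent the monomial `xⁿ`.  The linear span of `{xⁿ : n ∈ S}` is dense in
`L²[0,1]` if and only if `∑_{n ∈ S} 1/(n+1) = ∞`. -/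
theorem muntz_szasz_L2 (S : Set ℕ) (mono : ℕ → Lp ℂ 2 mu01)
    (hmono : ∀ n : ℕ, (mono n : ℝ → ℂ) =ᵐ[mu01] fun x => (x : ℂ) ^ n) :
    Dense (Submodule.span ℂ (mono '' S) : Set (Lp ℂ 2 mu01)) ↔
      ∑' n : S, (1 : ENNReal) / ((n : ℕ) + 1) = ⊤ := by
  rw [tsum_one_div_natCast_add_one_eq_top_iff, Set.image_eq_range]
  exact muntz_szasz_L2_general (fun m n h ↦ Subtype.ext (Nat.cast_injective h))
    (fun n ↦ by linarith [Nat.cast_nonneg (α := ℝ) (n : ℕ)]) fun n ↦ by simpa using hmono n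
end

section
/- (Müntz–Szász theorem, continuous case) Let S be a subset of the nonnegative integers. The linear span of the monomials {xⁿ : n ∈ S} is dense in C[0,1] (with the supremum norm) if and only if 0 ∈ S and ∑_{n∈S} 1/(n+1) = ∞. -/
open MeasureTheory Filter Topology

/-- The monomial `x ↦ xⁿ` as an element of `C([0,1], ℂ)`. -/
noncomputable def monC (n : ℕ) : C(Set.Icc (0 : ℝ) 1, ℂ) :=
  ⟨fun x => ((x : ℝ) : ℂ) ^ n, by fun_prop⟩

/-!
Taking real parts reduces the statement to real scalars, and by the Weierstrass theorem it remains
to decide which `x^m` with `m ∉ S` lie in the closed span of the `x^k`, `k ∈ S`.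

If `0 < m` and the series diverges, we follow von Golitschek. Given a polynomial `P` with
`x^m`-coefficient `1`, solve `l Q - x Q' = (l - m) P`, `Q(0) = Q(1) = 0`. This only adds a multiple
of `x^l`, and since `l Q = (l - m) P` at an interior extremum of `Q`, it multiplies the supremum
norm by at most `1 - m / l`. Starting from `x^m` and running through exponents `l ∈ S` beyond `m`,
the product of these factors tends to `0`.

If the series converges, the operator `x^k ↦ (k - l) / (k + l + 1) x^k` is a contraction of
`L²[0,1]`, as an integration by parts shows, and it kills `x^l`. Removing in this way all the
exponents `k ∈ S` of a combination `x^m - ∑ cₖ x^k` bounds its norm from below by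
`∏ |m - k| / (m + k + 1)`, up to a constant, and this product stays away from `0`.
-/

section Calculus

variable {E : Type*} [NormedAddCommGroup E] [InnerProductSpace ℝ E] {f f' : ℝ → E}

theorem mul_norm_le_of_norm_smul_sub_smul_deriv_le {c : ℝ → ℝ} {a b l B : ℝ} (hl : 0 ≤ l)
    (hf : ContinuousOn f (Set.Icc a b)) (hf' : ∀ x ∈ Set.Ioo a b, HasDerivAt f (f' x) x)
    (ha : f a = 0) (hb : f b = 0) (hB : ∀ x ∈ Set.Icc a b, ‖l • f x - c x • f' x‖ ≤ B)
    {x : ℝ} (hx : x ∈ Set.Icc a b) : l * ‖f x‖ ≤ B := by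
  obtain ⟨y, hy, hmax⟩ := isCompact_Icc.exists_isMaxOn (Set.nonempty_of_mem hx) hf.norm
  suffices l * ‖f y‖ ≤ B from (mul_le_mul_of_nonneg_left (hmax hx) hl).trans this
  rcases eq_or_ne (f y) 0 with hy0 | hy0
  · simpa [hy0] using (norm_nonneg _).trans (hB y hy)
  have hyab : y ∈ Set.Ioo a b :=
    ⟨hy.1.lt_of_ne (by rintro rfl; exact hy0 ha), hy.2.lt_of_ne (by rintro rfl; exact hy0 hb)⟩
  have hmax_sq : IsMaxOn (fun t => ‖f t‖ ^ 2) (Set.Icc a b) y :=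
    fun t ht => pow_le_pow_left₀ (norm_nonneg _) (hmax ht) 2
  -- At an interior maximum of `‖f‖` the derivative of `f` is orthogonal to `f`.
  have horth : inner ℝ (f y) (f' y) = 0 := by
    simpa using (hmax_sq.isLocalMax (Icc_mem_nhds hyab.1 hyab.2)).hasDerivAt_eq_zero
      (hf' y hyab).norm_sq
  refine le_of_mul_le_mul_left ?_ (norm_pos_iff.mpr hy0)
  calc ‖f y‖ * (l * ‖f y‖) = inner ℝ (f y) (l • f y - c y • f' y) := by
        rw [inner_sub_right, inner_smul_right, inner_smul_right, horth,
          real_inner_self_eq_norm_sq]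
        ring
    _ ≤ ‖f y‖ * ‖l • f y - c y • f' y‖ := real_inner_le_norm _ _
    _ ≤ ‖f y‖ * B := by gcongr; exact hB y hy

theorem integral_norm_smul_deriv_add_sq_sub_norm_smul_deriv_sub_sq
    (hf : ∀ x, HasDerivAt f (f' x) x) (hf' : Continuous f') (b l : ℝ) :
    ∫ x in (0 : ℝ)..b, (‖x • f' x + (l + 1) • f x‖ ^ 2 - ‖x • f' x - l • f x‖ ^ 2) =
      (2 * l + 1) * (b * ‖f b‖ ^ 2) := by
  have hcont : Continuous f := continuous_iff_continuousAt.mpr fun x => (hf x).continuousAt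
  have hderiv (x : ℝ) : HasDerivAt (fun t => (2 * l + 1) * (t * ‖f t‖ ^ 2))
      (‖x • f' x + (l + 1) • f x‖ ^ 2 - ‖x • f' x - l • f x‖ ^ 2) x := by
    refine (((hasDerivAt_id x).mul (hf x).norm_sq).const_mul (2 * l + 1)).congr_deriv ?_
    rw [norm_add_sq_real, norm_sub_sq_real]
    simp only [norm_smul, real_inner_smul_right, real_inner_comm (f x), mul_pow,
      Real.norm_eq_abs, sq_abs, id]
    ring
  rw [intervalIntegral.integral_eq_sub_of_hasDerivAt (fun x _ => hderiv x)
    (Continuous.intervalIntegrable (by fun_prop) 0 b)]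
  simp

theorem integral_norm_smul_deriv_sub_sq_le (hf : ∀ x, HasDerivAt f (f' x) x)
    (hf' : Continuous f') {b l : ℝ} (hb : 0 ≤ b) (hl : -1 / 2 ≤ l) :
    ∫ x in (0 : ℝ)..b, ‖x • f' x - l • f x‖ ^ 2 ≤
      ∫ x in (0 : ℝ)..b, ‖x • f' x + (l + 1) • f x‖ ^ 2 := by
  have hcont : Continuous f := continuous_iff_continuousAt.mpr fun x => (hf x).continuousAt
  have hboundary : 0 ≤ (2 * l + 1) * (b * ‖f b‖ ^ 2) := mul_nonneg (by linarith) (by positivity)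
  rwa [← integral_norm_smul_deriv_add_sq_sub_norm_smul_deriv_sub_sq hf hf',
    intervalIntegral.integral_sub (Continuous.intervalIntegrable (by fun_prop) 0 b)
      (Continuous.intervalIntegrable (by fun_prop) 0 b), sub_nonneg] at hboundary

end Calculus

section CoeffMul

open Polynomial

variable {R : Type*}

/-- The diagonal operator `Xᵏ ↦ c k Xᵏ` on polynomials, used to invert the Euler operators
`P ↦ a P ± X P'`. -/
noncomputable def coeffMul [Semiring R] (c : ℕ → R) (P : R[X]) : R[X] :=
  ∑ k ∈ P.support, monomial k (c k * P.coeff k)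

@[simp]
theorem coeff_coeffMul [Semiring R] (c : ℕ → R) (P : R[X]) (k : ℕ) :
    (coeffMul c P).coeff k = c k * P.coeff k := by
  simp +contextual [coeffMul, coeff_monomial]

theorem coeff_X_mul_derivative [CommSemiring R] (P : R[X]) (k : ℕ) :
    (X * derivative P).coeff k = k * P.coeff k := by
  cases k with
  | zero => simp
  | succ k => rw [coeff_X_mul, coeff_derivative]; push_cast; ring

end CoeffMul

section UpperBound

open Polynomial

/-- The witness solves the Euler equation `l Q - X Q' = P` with `Q(0) = Q(1) = 0`, so the maximum
principle applies to it. -/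
theorem exists_polynomial_coeff_eq_and_mul_abs_eval_le {P : ℝ[X]} {l : ℕ} {B : ℝ} (hl : l ≠ 0)
    (hP0 : P.coeff 0 = 0) (hPl : P.coeff l = 0) (hB : ∀ x ∈ Set.Icc (0 : ℝ) 1, |P.eval x| ≤ B) :
    ∃ Q : ℝ[X], (∀ k ≠ l, Q.coeff k = ((l : ℝ) - k)⁻¹ * P.coeff k) ∧
      ∀ x ∈ Set.Icc (0 : ℝ) 1, l * |Q.eval x| ≤ B := by
  -- The multiplier is the junk value `0⁻¹ = 0` at `k = l`, where `P` has no coefficient anyway.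
  set R := coeffMul (fun k => ((l : ℝ) - k)⁻¹) P
  set Q := R - C (R.eval 1) * X ^ l with hQ
  have hQcoeff (k : ℕ) (hk : k ≠ l) : Q.coeff k = ((l : ℝ) - k)⁻¹ * P.coeff k := by
    simp [hQ, R, coeff_X_pow, hk]
  have hQ0 : Q.eval 0 = 0 := by
    rw [← coeff_zero_eq_eval_zero, hQcoeff 0 hl.symm, hP0, mul_zero]
  have hQ1 : Q.eval 1 = 0 := by simp [hQ]
  have hode : C (l : ℝ) * Q - X * derivative Q = P := by
    ext k
    rw [coeff_sub, coeff_C_mul, coeff_X_mul_derivative, ← sub_mul]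
    rcases eq_or_ne k l with rfl | hk
    · simp [hPl]
    · rw [hQcoeff k hk, mul_inv_cancel_left₀ (sub_ne_zero.mpr (by exact_mod_cast hk.symm))]
  refine ⟨Q, hQcoeff, fun x hx => ?_⟩
  refine mul_norm_le_of_norm_smul_sub_smul_deriv_le (c := id) l.cast_nonneg Q.continuousOn
    (fun y _ => Q.hasDerivAt y) hQ0 hQ1 (fun y hy => ?_) hx
  simpa [← hode] using hB y hy

theorem exists_polynomial_abs_eval_le_prod {m : ℕ} (hm : m ≠ 0) (F : Finset ℕ)
    (hF : ∀ k ∈ F, m < k) :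
    ∃ P : ℝ[X], P.coeff m = 1 ∧ P.support ⊆ insert m F ∧
      ∀ x ∈ Set.Icc (0 : ℝ) 1, |P.eval x| ≤ ∏ k ∈ F, (1 - (m : ℝ) / k) := by
  induction F using Finset.induction_on with
  | empty =>
    refine ⟨X ^ m, by simp, by simp, fun x hx => ?_⟩
    simpa [abs_of_nonneg hx.1] using pow_le_one₀ hx.1 hx.2
  | insert l F hlF ih =>
    rw [Finset.forall_mem_insert] at hF
    obtain ⟨hml, hmF⟩ := hF
    obtain ⟨P, hPm, hP, hPB⟩ := ih hmF
    have hPcoeff {k : ℕ} (hkm : k ≠ m) (hkF : k ∉ F) : P.coeff k = 0 :=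
      notMem_support_iff.mp fun hk => by simpa [hkm, hkF] using hP hk
    obtain ⟨Q, hQ, hQB⟩ := exists_polynomial_coeff_eq_and_mul_abs_eval_le (by omega : l ≠ 0)
      (hPcoeff hm.symm fun h => absurd (hmF 0 h) (by omega)) (hPcoeff hml.ne' hlF) hPB
    have hlm : 0 < (l : ℝ) - m := sub_pos.mpr (by exact_mod_cast hml)
    have hl : (0 : ℝ) < l := by exact_mod_cast hml.pos
    refine ⟨C ((l : ℝ) - m) * Q, ?_, fun k hk => ?_, fun x hx => ?_⟩
    · rw [coeff_C_mul, hQ m hml.ne, hPm, mul_one, mul_inv_cancel₀ hlm.ne']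
    · contrapose! hk
      simp only [Finset.mem_insert, not_or] at hk
      rw [notMem_support_iff, coeff_C_mul, hQ k hk.2.1, hPcoeff hk.1 hk.2.2, mul_zero, mul_zero]
    · calc |(C ((l : ℝ) - m) * Q).eval x| = (1 - (m : ℝ) / l) * (l * |Q.eval x|) := by
            rw [eval_mul, eval_C, abs_mul, abs_of_pos hlm]
            field_simp
        _ ≤ (1 - (m : ℝ) / l) * ∏ k ∈ F, (1 - (m : ℝ) / k) := by
            gcongr
            · rw [one_sub_div hl.ne']; positivity
            · exact hQB x hx
        _ = ∏ k ∈ insert l F, (1 - (m : ℝ) / k) := by rw [Finset.prod_insert hlF]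

theorem prod_one_sub_div_le_exp {m : ℕ} (hm : m ≠ 0) {F : Finset ℕ} (hF : ∀ k ∈ F, m < k) :
    ∏ k ∈ F, (1 - (m : ℝ) / k) ≤ Real.exp (-∑ k ∈ F, 1 / ((k : ℝ) + 1)) := by
  rw [← Finset.sum_neg_distrib, Real.exp_sum]
  refine Finset.prod_le_prod (fun k hk => ?_) fun k hk => ?_
  · exact sub_nonneg.mpr (div_le_one_of_le₀ (by exact_mod_cast (hF k hk).le) k.cast_nonneg)
  · have hk0 : (0 : ℝ) < k := by exact_mod_cast (hF k hk).pos
    have hm1 : (1 : ℝ) ≤ m := by exact_mod_cast Nat.one_le_iff_ne_zero.mpr hm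
    have hle : 1 / ((k : ℝ) + 1) ≤ m / k := by gcongr; linarith
    linarith [Real.add_one_le_exp (-(1 / ((k : ℝ) + 1)))]

end UpperBound

section LowerBound

open Polynomial

theorem integral_sq_eval_coeffMul_le {l : ℝ} (hl : -1 / 2 ≤ l) (P : ℝ[X]) :
    ∫ x in (0 : ℝ)..1, (coeffMul (fun k => (k - l) / (k + l + 1)) P).eval x ^ 2 ≤
      ∫ x in (0 : ℝ)..1, P.eval x ^ 2 := by
  set R := coeffMul (fun k => (k + l + 1)⁻¹) P
  have hP : X * derivative R + C (l + 1) * R = P := by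
    ext k
    have : (k : ℝ) + l + 1 ≠ 0 := by linarith [k.cast_nonneg (α := ℝ)]
    rw [coeff_add, coeff_X_mul_derivative, coeff_C_mul, coeff_coeffMul]
    field_simp
    ring
  have hU : X * derivative R - C l * R = coeffMul (fun k => (k - l) / (k + l + 1)) P := by
    ext k
    rw [coeff_sub, coeff_X_mul_derivative, coeff_C_mul, coeff_coeffMul, coeff_coeffMul]
    ring
  calc ∫ x in (0 : ℝ)..1, (coeffMul (fun k => (k - l) / (k + l + 1)) P).eval x ^ 2
      = ∫ x in (0 : ℝ)..1, ‖x • R.derivative.eval x - l • R.eval x‖ ^ 2 := by simp [← hU]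
    _ ≤ ∫ x in (0 : ℝ)..1, ‖x • R.derivative.eval x + (l + 1) • R.eval x‖ ^ 2 :=
        integral_norm_smul_deriv_sub_sq_le R.hasDerivAt R.derivative.continuous zero_le_one hl
    _ = ∫ x in (0 : ℝ)..1, (X * derivative R + C (l + 1) * R).eval x ^ 2 := by simp
    _ = ∫ x in (0 : ℝ)..1, P.eval x ^ 2 := by rw [hP]

theorem sq_coeff_mul_prod_le_integral_sq_eval {m : ℕ} (F : Finset ℕ) {P : ℝ[X]}
    (hP : P.support ⊆ insert m F) :
    P.coeff m ^ 2 * ∏ k ∈ F, (((m : ℝ) - k) / (m + k + 1)) ^ 2 ≤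
      (2 * m + 1) * ∫ x in (0 : ℝ)..1, P.eval x ^ 2 := by
  induction F using Finset.induction_on generalizing P with
  | empty =>
    obtain ⟨a, rfl⟩ : ∃ a, C a * X ^ m = P := by
      refine ⟨P.coeff m, ?_⟩
      ext k
      rcases eq_or_ne k m with rfl | hkm
      · simp
      · have hk : k ∉ P.support := fun hk => hkm (by simpa using hP hk)
        simp [coeff_X_pow, hkm, notMem_support_iff.mp hk]
    have hint : ∫ x in (0 : ℝ)..1, (C a * X ^ m).eval x ^ 2 = a ^ 2 / (2 * m + 1) := by
      simp [mul_pow, ← pow_mul, mul_comm m 2, div_eq_mul_inv]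
    rw [hint, mul_div_cancel₀ _ (by positivity)]
    simp
  | insert l F hlF ih =>
    set U := coeffMul (fun k => ((k : ℝ) - l) / (k + l + 1)) P with hUdef
    have hU : U.support ⊆ insert m F := fun k hk => by
      have hkU : k ≠ l ∧ P.coeff k ≠ 0 := by
        rw [mem_support_iff, hUdef, coeff_coeffMul] at hk
        exact ⟨by rintro rfl; simp at hk, right_ne_zero_of_mul hk⟩
      simpa [hkU.1] using hP (mem_support_iff.mpr hkU.2)
    calc P.coeff m ^ 2 * ∏ k ∈ insert l F, (((m : ℝ) - k) / (m + k + 1)) ^ 2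
        = U.coeff m ^ 2 * ∏ k ∈ F, (((m : ℝ) - k) / (m + k + 1)) ^ 2 := by
          rw [Finset.prod_insert hlF, hUdef, coeff_coeffMul]
          ring
      _ ≤ (2 * m + 1) * ∫ x in (0 : ℝ)..1, U.eval x ^ 2 := ih hU
      _ ≤ (2 * m + 1) * ∫ x in (0 : ℝ)..1, P.eval x ^ 2 := by
          gcongr
          exact integral_sq_eval_coeffMul_le (by linarith [l.cast_nonneg (α := ℝ)]) P

theorem exp_neg_le_abs_sub_div {m k : ℕ} (h : m ≠ k) :
    Real.exp (-((2 * m + 1) * (m + 2) * (1 / ((k : ℝ) + 1)))) ≤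
      |(m : ℝ) - k| / (m + k + 1) := by
  have hd1 : 1 ≤ |(m : ℝ) - k| := by
    have : (1 : ℤ) ≤ |(m : ℤ) - k| := Int.one_le_abs (sub_ne_zero.mpr (mod_cast h))
    exact_mod_cast this
  have hkd : (k : ℝ) - m ≤ |(m : ℝ) - k| := by rw [abs_sub_comm]; exact le_abs_self _
  set d := |(m : ℝ) - k|
  have hd : 0 < d := one_pos.trans_le hd1
  have hkmd : (k : ℝ) + 1 ≤ (m + 2) * d := by nlinarith [m.cast_nonneg (α := ℝ)]
  rw [Real.exp_neg, ← inv_div _ d]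
  refine inv_anti₀ (by positivity) ?_
  calc (m + k + 1) / d ≤ (2 * m + 1) * (1 / d) + 1 := by
        rw [div_le_iff₀ hd]
        field_simp
        linarith
    _ ≤ (2 * m + 1) * ((m + 2) * (1 / ((k : ℝ) + 1))) + 1 := by
        gcongr
        rw [mul_one_div, div_le_div_iff₀ hd (by positivity)]
        linarith
    _ ≤ _ := by
        rw [← mul_assoc]
        exact Real.add_one_le_exp _

theorem exists_pos_forall_le_prod_sq_sub_div {S : Set ℕ} {m : ℕ} (hm : m ∉ S)
    (hS : Summable (S.indicator fun n : ℕ => 1 / ((n : ℝ) + 1))) :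
    ∃ δ > 0, ∀ F : Finset ℕ, (F : Set ℕ) ⊆ S →
      δ ≤ ∏ k ∈ F, (((m : ℝ) - k) / (m + k + 1)) ^ 2 := by
  set c : ℝ := (2 * m + 1) * (m + 2)
  set M := ∑' n, S.indicator (fun n : ℕ => 1 / ((n : ℝ) + 1)) n
  refine ⟨Real.exp (-(c * M)) ^ 2, by positivity, fun F hF => ?_⟩
  have hsum : ∑ k ∈ F, 1 / ((k : ℝ) + 1) ≤ M := by
    rw [← Finset.sum_congr rfl fun k hk =>
      Set.indicator_of_mem (hF hk) fun n : ℕ => 1 / ((n : ℝ) + 1)]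
    exact hS.sum_le_tsum _ fun n _ => Set.indicator_nonneg (fun k _ => by positivity) n
  have hprod : Real.exp (-(c * M)) ≤ ∏ k ∈ F, |(m : ℝ) - k| / (m + k + 1) := by
    calc Real.exp (-(c * M)) ≤ Real.exp (-(c * ∑ k ∈ F, 1 / ((k : ℝ) + 1))) := by gcongr
      _ = ∏ k ∈ F, Real.exp (-(c * (1 / ((k : ℝ) + 1)))) := by
          rw [Finset.mul_sum, ← Finset.sum_neg_distrib, Real.exp_sum]
      _ ≤ _ := Finset.prod_le_prod (fun k _ => (Real.exp_pos _).le) fun k hk =>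
          exp_neg_le_abs_sub_div fun hmk => hm (hmk ▸ hF hk)
  calc Real.exp (-(c * M)) ^ 2 ≤ (∏ k ∈ F, |(m : ℝ) - k| / (m + k + 1)) ^ 2 := by gcongr
    _ = _ := by simp only [← Finset.prod_pow, div_pow, sq_abs]

end LowerBound

section Series

theorem exists_finset_lt_sum_of_not_summable_indicator {ι : Type*} {f : ι → ℝ} {s t : Set ι}
    (hf : ∀ i, 0 ≤ f i) (hs : ¬ Summable (s.indicator f)) (ht : t.Finite) (c : ℝ) :
    ∃ F : Finset ι, (F : Set ι) ⊆ s \ t ∧ c < ∑ i ∈ F, f i := by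
  classical
  by_contra! hbdd
  have hdiff : Summable ((s \ t).indicator f) := by
    refine summable_of_sum_le (c := c) (fun i => Set.indicator_nonneg (fun i _ => hf i) i)
      fun u => ?_
    rw [Finset.sum_indicator_eq_sum_filter u (fun _ => f) (fun _ => s \ t) (fun i => i)]
    exact hbdd _ fun i hi => (Finset.mem_filter.mp hi).2
  refine hs ((summable_congr_cofinite ?_).mp hdiff)
  filter_upwards [ht.compl_mem_cofinite] with i hi
  by_cases his : i ∈ s <;> simp_all

theorem tsum_one_div_eq_top_iff_not_summable_indicator (S : Set ℕ) :
    ∑' n : S, (1 : ENNReal) / ((n : ℕ) + 1) = ⊤ ↔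
      ¬ Summable (S.indicator fun n : ℕ => 1 / ((n : ℝ) + 1)) := by
  have hcoe (n : S) : (1 : ENNReal) / ((n : ℕ) + 1) = ((1 / ((n : ℕ) + 1) : NNReal) : ENNReal) := by
    rw [ENNReal.coe_div (by positivity)]
    push_cast
    rfl
  simp_rw [hcoe, ENNReal.tsum_coe_eq_top_iff_not_summable_coe, ← summable_subtype_iff_indicator]
  push_cast
  rfl

theorem exists_notMem_of_summable_indicator_one_div {S : Set ℕ}
    (hS : Summable (S.indicator fun n : ℕ => 1 / ((n : ℝ) + 1))) : ∃ m, m ∉ S := by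
  by_contra! hall
  rw [Set.eq_univ_of_forall hall, Set.indicator_univ] at hS
  exact Real.not_summable_one_div_natCast ((summable_nat_add_iff 1).mp (mod_cast hS))

end Series

section ScalarExtension

variable {X : Type*} (𝕜 : Type*) [TopologicalSpace X] [RCLike 𝕜] {s : Set C(X, ℝ)}

/-- The inclusion of `C(X, ℝ)` into `C(X, 𝕜)`, as a real-linear map; it reduces density over `𝕜` to
density over `ℝ`. -/
noncomputable def ofRealComp : C(X, ℝ) →L[ℝ] C(X, 𝕜) :=
  RCLike.ofRealCLM.compLeftContinuous ℝ X

@[simp]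
theorem ofRealComp_apply (g : C(X, ℝ)) (x : X) : ofRealComp 𝕜 g x = (g x : 𝕜) := rfl

theorem ofRealComp_mem_span {g : C(X, ℝ)} (hg : g ∈ Submodule.span ℝ s) :
    ofRealComp 𝕜 g ∈ Submodule.span 𝕜 (ofRealComp 𝕜 '' s) := by
  refine Submodule.span_subset_span ℝ 𝕜 _ ?_
  rw [← ContinuousLinearMap.coe_coe, ← Submodule.map_span]
  exact Submodule.mem_map_of_mem hg

variable {𝕜}

theorem re_comp_mem_span {f : C(X, 𝕜)} (hf : f ∈ Submodule.span 𝕜 (ofRealComp 𝕜 '' s)) :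
    RCLike.reCLM.compLeftContinuous ℝ X f ∈ Submodule.span ℝ s := by
  suffices ∀ a : 𝕜, RCLike.reCLM.compLeftContinuous ℝ X (a • f) ∈ Submodule.span ℝ s by
    simpa only [one_smul] using this 1
  induction hf using Submodule.span_induction with
  | mem f hf =>
    obtain ⟨g, hg, rfl⟩ := hf
    intro a
    convert Submodule.smul_mem _ (RCLike.re a) (Submodule.subset_span hg) using 1
    ext x
    simp
  | zero => simp only [smul_zero, map_zero, zero_mem, implies_true]
  | add f g _ _ hf hg =>
    intro a
    rw [show a • (f + g) = a • f + a • g from smul_add a f g, map_add]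
    exact Submodule.add_mem _ (hf a) (hg a)
  | smul b f _ hf =>
    intro a
    rw [smul_smul]
    exact hf (a * b)

theorem dense_span_ofRealComp_image_iff :
    Dense (Submodule.span 𝕜 (ofRealComp 𝕜 '' s) : Set C(X, 𝕜)) ↔
      Dense (Submodule.span ℝ s : Set C(X, ℝ)) := by
  refine ⟨fun h g => ?_, fun h f => ?_⟩
  · have hre : RCLike.reCLM.compLeftContinuous ℝ X (ofRealComp 𝕜 g) = g := by ext; simp
    rw [← hre]
    exact map_mem_closure (ContinuousLinearMap.continuous _) (h _) fun _ => re_comp_mem_span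
  · have hreal (g : C(X, ℝ)) :
        ofRealComp 𝕜 g ∈ (Submodule.span 𝕜 (ofRealComp 𝕜 '' s)).topologicalClosure :=
      map_mem_closure (ofRealComp 𝕜).continuous (h g) fun _ => ofRealComp_mem_span 𝕜
    have hf : f = ofRealComp 𝕜 (RCLike.reCLM.compLeftContinuous ℝ X f) +
        (RCLike.I : 𝕜) • ofRealComp 𝕜 (RCLike.imCLM.compLeftContinuous ℝ X f) := by
      ext x
      simp [mul_comm RCLike.I, RCLike.re_add_im]
    rw [hf]
    exact Submodule.add_mem _ (hreal _) (Submodule.smul_mem _ _ (hreal _))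

end ScalarExtension

section Powers

open Polynomial

variable {R A : Type*} [CommSemiring R] [Semiring A] [Algebra R A] {a : A}

theorem aeval_mem_of_forall_pow_mem {V : Submodule R A} {P : R[X]}
    (h : ∀ k ∈ P.support, a ^ k ∈ V) : aeval a P ∈ V := by
  rw [aeval_def, eval₂_eq_sum, Polynomial.sum]
  refine Submodule.sum_mem _ fun k hk => ?_
  rw [← Algebra.smul_def]
  exact Submodule.smul_mem _ _ (h k hk)

theorem mem_span_pow_image_iff {S : Set ℕ} {x : A} :
    x ∈ Submodule.span R ((a ^ ·) '' S) ↔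
      ∃ P : R[X], (P.support : Set ℕ) ⊆ S ∧ aeval a P = x := by
  refine ⟨fun hx => ?_, ?_⟩
  · induction hx using Submodule.span_induction with
    | mem x hx =>
      obtain ⟨n, hn, rfl⟩ := hx
      refine ⟨monomial n 1, fun k hk => ?_, by simp⟩
      rwa [Finset.mem_singleton.mp (support_monomial_subset n (1 : R) hk)]
    | zero => exact ⟨0, by simp, by simp⟩
    | add x y _ _ hx hy =>
      obtain ⟨⟨P, hP, rfl⟩, Q, hQ, rfl⟩ := And.intro hx hy
      refine ⟨P + Q, fun k hk => ?_, map_add _ _ _⟩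
      exact (Finset.mem_union.mp (support_add hk)).elim (fun h => hP h) fun h => hQ h
    | smul c x _ hx =>
      obtain ⟨P, hP, rfl⟩ := hx
      exact ⟨c • P, fun k hk => hP (support_smul c P hk), map_smul _ _ _⟩
  · rintro ⟨P, hP, rfl⟩
    exact aeval_mem_of_forall_pow_mem fun k hk => Submodule.subset_span ⟨k, hP hk, rfl⟩

end Powers

/-- The coordinate function `x ↦ x` as an element of `C([0,1], 𝕜)`. The monomials are its powers, so
that polynomials act through `Polynomial.aeval (coordinateMap 𝕜)`. -/
def coordinateMap (𝕜 : Type*) [RCLike 𝕜] : C(Set.Icc (0 : ℝ) 1, 𝕜) :=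
  ⟨fun x => ((x : ℝ) : 𝕜), by fun_prop⟩

@[simp]
theorem coordinateMap_apply (𝕜 : Type*) [RCLike 𝕜] (x : Set.Icc (0 : ℝ) 1) :
    coordinateMap 𝕜 x = ((x : ℝ) : 𝕜) := rfl

section Real

open Polynomial

theorem aeval_coordinateMap (P : ℝ[X]) :
    aeval (coordinateMap ℝ) P = P.toContinuousMapOn (Set.Icc 0 1) := by
  ext x
  simp

theorem dense_of_forall_coordinateMap_pow_mem_closure {V : Submodule ℝ C(Set.Icc (0 : ℝ) 1, ℝ)}
    (hV : ∀ m, coordinateMap ℝ ^ m ∈ V.topologicalClosure) :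
    Dense (V : Set C(Set.Icc (0 : ℝ) 1, ℝ)) := by
  have hpoly : (polynomialFunctions (Set.Icc (0 : ℝ) 1) : Set C(Set.Icc (0 : ℝ) 1, ℝ)) ⊆
      V.topologicalClosure := by
    rw [polynomialFunctions_coe]
    rintro _ ⟨P, rfl⟩
    rw [toContinuousMapOnAlgHom_apply, ← aeval_coordinateMap]
    exact aeval_mem_of_forall_pow_mem fun k _ => hV k
  intro f
  have hf : f ∈ (polynomialFunctions (Set.Icc (0 : ℝ) 1)).topologicalClosure := by
    rw [polynomialFunctions_closure_eq_top]
    trivial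
  exact closure_minimal hpoly V.isClosed_topologicalClosure hf

theorem coordinateMap_pow_mem_closure_span {S : Set ℕ} {m : ℕ} (hm : m ≠ 0)
    (hS : ¬ Summable (S.indicator fun n : ℕ => 1 / ((n : ℝ) + 1))) :
    coordinateMap ℝ ^ m ∈ (Submodule.span ℝ ((coordinateMap ℝ ^ ·) '' S)).topologicalClosure := by
  by_cases hmS : m ∈ S
  · exact Submodule.le_topologicalClosure _ (Submodule.subset_span ⟨m, hmS, rfl⟩)
  refine Metric.mem_closure_iff.mpr fun ε hε => ?_
  obtain ⟨F, hF, hlog⟩ := exists_finset_lt_sum_of_not_summable_indicator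
    (fun n => by positivity) hS (Set.finite_Iic m) (-Real.log ε)
  have hmF (k : ℕ) (hk : k ∈ F) : m < k := not_le.mp (hF hk).2
  obtain ⟨P, hPm, hP, hPB⟩ := exists_polynomial_abs_eval_le_prod hm F hmF
  have hsupp : ((X ^ m - P).support : Set ℕ) ⊆ S := fun k hk => by
    rw [Finset.mem_coe, mem_support_iff, coeff_sub, coeff_X_pow] at hk
    rcases eq_or_ne k m with rfl | hkm
    · simp [hPm] at hk
    · have hkP : k ∈ P.support := by simpa [hkm] using hk
      exact (hF (Finset.mem_of_mem_insert_of_ne (hP hkP) hkm)).1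
  refine ⟨_, mem_span_pow_image_iff.mpr ⟨_, hsupp, rfl⟩, ?_⟩
  rw [dist_eq_norm, map_sub, map_pow, aeval_X, sub_sub_cancel, aeval_coordinateMap,
    ContinuousMap.norm_lt_iff _ hε]
  intro x
  calc |P.eval (x : ℝ)| ≤ Real.exp (-∑ k ∈ F, 1 / ((k : ℝ) + 1)) :=
        (hPB x x.2).trans (prod_one_sub_div_le_exp hm hmF)
    _ < ε := by rw [← Real.lt_log_iff_exp_lt hε]; linarith

theorem integral_sq_eval_le_norm_toContinuousMapOn_sq (P : ℝ[X]) :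
    ∫ x in (0 : ℝ)..1, P.eval x ^ 2 ≤ ‖P.toContinuousMapOn (Set.Icc 0 1)‖ ^ 2 := by
  have hle (x : ℝ) (hx : x ∈ Set.Icc (0 : ℝ) 1) :
      P.eval x ^ 2 ≤ ‖P.toContinuousMapOn (Set.Icc 0 1)‖ ^ 2 :=
    sq_le_sq.mpr (((P.toContinuousMapOn _).norm_coe_le_norm ⟨x, hx⟩).trans (le_abs_self _))
  simpa using intervalIntegral.integral_mono_on (μ := volume) zero_le_one
    ((P.continuous.pow 2).intervalIntegrable 0 1) (continuous_const.intervalIntegrable 0 1) hle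

theorem coordinateMap_pow_notMem_closure_span {S : Set ℕ} {m : ℕ} (hm : m ∉ S)
    (hS : Summable (S.indicator fun n : ℕ => 1 / ((n : ℝ) + 1))) :
    coordinateMap ℝ ^ m ∉ (Submodule.span ℝ ((coordinateMap ℝ ^ ·) '' S)).topologicalClosure := by
  obtain ⟨δ, hδ, hprod⟩ := exists_pos_forall_le_prod_sq_sub_div hm hS
  intro hmem
  obtain ⟨_, hf, hdist⟩ := Metric.mem_closure_iff.mp hmem (√(δ / (2 * m + 1))) (by positivity)
  obtain ⟨P, hP, rfl⟩ := mem_span_pow_image_iff.mp hf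
  have hcoeff : (X ^ m - P).coeff m = 1 := by
    simp [notMem_support_iff.mp fun h => hm (hP h)]
  have hsupp : (X ^ m - P).support ⊆ insert m P.support := fun k hk => by
    rw [mem_support_iff, coeff_sub, coeff_X_pow] at hk
    rcases eq_or_ne k m with rfl | hkm
    · exact Finset.mem_insert_self k _
    · exact Finset.mem_insert_of_mem (by simpa [hkm] using hk)
  have hlower : δ ≤ (2 * m + 1) * dist (coordinateMap ℝ ^ m) (aeval (coordinateMap ℝ) P) ^ 2 :=
    calc δ ≤ (X ^ m - P).coeff m ^ 2 * ∏ k ∈ P.support, (((m : ℝ) - k) / (m + k + 1)) ^ 2 := by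
          simpa [hcoeff] using hprod _ hP
      _ ≤ (2 * m + 1) * ∫ x in (0 : ℝ)..1, (X ^ m - P).eval x ^ 2 :=
          sq_coeff_mul_prod_le_integral_sq_eval _ hsupp
      _ ≤ (2 * m + 1) * ‖(X ^ m - P).toContinuousMapOn (Set.Icc 0 1)‖ ^ 2 := by
          gcongr; exact integral_sq_eval_le_norm_toContinuousMapOn_sq _
      _ = _ := by rw [← aeval_coordinateMap, map_sub, map_pow, aeval_X, dist_eq_norm]
  rw [Real.lt_sqrt dist_nonneg, lt_div_iff₀ (by positivity)] at hdist
  linarith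

theorem one_notMem_closure_span_coordinateMap_pow {S : Set ℕ} (h0 : 0 ∉ S) :
    1 ∉ (Submodule.span ℝ ((coordinateMap ℝ ^ ·) '' S)).topologicalClosure := by
  set eval₀ : C(Set.Icc (0 : ℝ) 1, ℝ) →L[ℝ] ℝ := ContinuousMap.evalCLM ℝ ⟨0, by simp⟩
  have hspan : Submodule.span ℝ ((coordinateMap ℝ ^ ·) '' S) ≤ eval₀.ker := by
    rw [Submodule.span_le]
    rintro _ ⟨n, hn, rfl⟩
    simp [eval₀, ne_of_mem_of_not_mem hn h0]
  intro h
  simpa [eval₀] using Submodule.topologicalClosure_minimal _ hspan eval₀.isClosed_ker h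

theorem dense_span_coordinateMap_pow_iff (S : Set ℕ) :
    Dense (Submodule.span ℝ ((coordinateMap ℝ ^ ·) '' S) : Set C(Set.Icc (0 : ℝ) 1, ℝ)) ↔
      0 ∈ S ∧ ¬ Summable (S.indicator fun n : ℕ => 1 / ((n : ℝ) + 1)) := by
  constructor
  · intro h
    refine ⟨?_, fun hsum => ?_⟩
    · by_contra h0
      exact one_notMem_closure_span_coordinateMap_pow h0 (h 1)
    · obtain ⟨m, hm⟩ := exists_notMem_of_summable_indicator_one_div hsum
      exact coordinateMap_pow_notMem_closure_span hm hsum (h _)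
  · rintro ⟨h0, hS⟩
    refine dense_of_forall_coordinateMap_pow_mem_closure fun m => ?_
    rcases eq_or_ne m 0 with rfl | hm
    · exact Submodule.le_topologicalClosure _ (Submodule.subset_span ⟨0, h0, rfl⟩)
    · exact coordinateMap_pow_mem_closure_span hm hS

end Real

theorem muntz_szasz_continuous_general (𝕜 : Type*) [RCLike 𝕜] (S : Set ℕ) :
    Dense (Submodule.span 𝕜 ((coordinateMap 𝕜 ^ ·) '' S) : Set C(Set.Icc (0 : ℝ) 1, 𝕜)) ↔
      0 ∈ S ∧ ∑' n : S, (1 : ENNReal) / ((n : ℕ) + 1) = ⊤ := by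
  have himage : (coordinateMap 𝕜 ^ ·) '' S =
      ofRealComp 𝕜 '' ((coordinateMap ℝ ^ ·) '' S) := by
    rw [Set.image_image]
    congr! 2 with n
    ext x
    simp
  rw [himage, dense_span_ofRealComp_image_iff, dense_span_coordinateMap_pow_iff,
    tsum_one_div_eq_top_iff_not_summable_indicator]

/-- **Müntz–Szász theorem, continuous case.** Let `S ⊆ ℕ`.  The linear span of the
monomials `{xⁿ : n ∈ S}` is dense in `C([0,1], ℂ)` (with the supremum norm) if and
only if `0 ∈ S` and `∑_{n ∈ S} 1/(n+1) = ∞`. -/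
theorem muntz_szasz_continuous (S : Set ℕ) :
    Dense (Submodule.span ℂ (monC '' S) : Set C(Set.Icc (0 : ℝ) 1, ℂ)) ↔
      0 ∈ S ∧ ∑' n : S, (1 : ENNReal) / ((n : ℕ) + 1) = ⊤ :=
  muntz_szasz_continuous_general ℂ S
end
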